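/- arXiv:2101.03266 — 3 statements merged into one kernel-verified Lean document; each statement's English description precedes it below -/
import Mathlib

section
/- Let ω > 0 and h > 0 with ω·h < 2π, and set c₀ = −1/ω² + (h/(2ω))·cot(ω·h/2) and c₋₁ = −c₀. Then c₀ < 0 and c₋₁ > h²/12 > 0. -/
/-!
With `x = ω h / 2 ∈ (0, π)` one has `ω² c₋₁ = 1 - x cot x` and `ω² (h² / 12) = x² / 3`, so the
claim is `x cot x < 1 - x² / 3`. After multiplication by `sin x > 0`, the difference of the two
sides vanishes at `0` and has derivative `(x / 3) (sin x - x cos x)`. The factor `sin x - x cos x`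
in turn vanishes at `0` and has derivative `x sin x > 0`.
-/

open Real

theorem strictMonoOn_sin_sub_mul_cos :
    StrictMonoOn (fun x ↦ sin x - x * cos x) (Set.Icc 0 π) := by
  have hderiv (x : ℝ) : HasDerivAt (fun x ↦ sin x - x * cos x) (x * sin x) x :=
    ((hasDerivAt_sin x).sub ((hasDerivAt_id' x).mul (hasDerivAt_cos x))).congr_deriv (by ring)
  refine strictMonoOn_of_hasDerivWithinAt_pos (convex_Icc 0 π) (by fun_prop)
    (fun x _ ↦ (hderiv x).hasDerivWithinAt) fun x hx ↦ ?_
  rw [interior_Icc] at hx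
  exact mul_pos hx.1 (sin_pos_of_mem_Ioo hx)

theorem mul_cos_lt_sin {x : ℝ} (hx₀ : 0 < x) (hxπ : x ≤ π) : x * cos x < sin x := by
  simpa using
    strictMonoOn_sin_sub_mul_cos (Set.left_mem_Icc.2 pi_pos.le) ⟨hx₀.le, hxπ⟩ hx₀

theorem strictMonoOn_one_sub_sq_div_three_mul_sin_sub_mul_cos :
    StrictMonoOn (fun x ↦ (1 - x ^ 2 / 3) * sin x - x * cos x) (Set.Icc 0 π) := by
  have hderiv (x : ℝ) : HasDerivAt (fun x ↦ (1 - x ^ 2 / 3) * sin x - x * cos x)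
      (x / 3 * (sin x - x * cos x)) x :=
    (((((hasDerivAt_pow 2 x).div_const 3).const_sub 1).mul (hasDerivAt_sin x)).sub
      ((hasDerivAt_id' x).mul (hasDerivAt_cos x))).congr_deriv (by push_cast; ring)
  refine strictMonoOn_of_hasDerivWithinAt_pos (convex_Icc 0 π) (by fun_prop)
    (fun x _ ↦ (hderiv x).hasDerivWithinAt) fun x hx ↦ ?_
  rw [interior_Icc] at hx
  exact mul_pos (div_pos hx.1 three_pos) (sub_pos.2 (mul_cos_lt_sin hx.1 hx.2.le))

theorem mul_cos_lt_one_sub_sq_div_three_mul_sin {x : ℝ} (hx₀ : 0 < x) (hxπ : x ≤ π) :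
    x * cos x < (1 - x ^ 2 / 3) * sin x := by
  simpa using strictMonoOn_one_sub_sq_div_three_mul_sin_sub_mul_cos
    (Set.left_mem_Icc.2 pi_pos.le) ⟨hx₀.le, hxπ⟩ hx₀

theorem mul_cot_lt_one_sub_sq_div_three {x : ℝ} (hx₀ : 0 < x) (hxπ : x < π) :
    x * cot x < 1 - x ^ 2 / 3 := by
  rw [cot_eq_cos_div_sin, ← mul_div_assoc, div_lt_iff₀ (sin_pos_of_pos_of_lt_pi hx₀ hxπ)]
  exact mul_cos_lt_one_sub_sq_div_three_mul_sin hx₀ hxπ.le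

theorem integratorA_coeff_signs
    (ω h : ℝ) (hω : 0 < ω) (hh : 0 < h) (hωh : ω * h < 2 * Real.pi)
    (c₀ cm1 : ℝ)
    (hc₀ : c₀ = -1 / ω ^ 2 + (h / (2 * ω)) * Real.cot (ω * h / 2))
    (hcm1 : cm1 = -c₀) :
    c₀ < 0 ∧ cm1 > h ^ 2 / 12 ∧ h ^ 2 / 12 > 0 := by
  have hpos : 0 < h ^ 2 / 12 := by positivity
  have hcot : ω * h / 2 * cot (ω * h / 2) < 1 - (ω * h / 2) ^ 2 / 3 :=
    mul_cot_lt_one_sub_sq_div_three (by positivity) (by linarith)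
  have hbound : h ^ 2 / 12 < cm1 := calc
    h ^ 2 / 12 = (ω * h / 2) ^ 2 / 3 / ω ^ 2 := by field_simp; norm_num
    _ < (1 - ω * h / 2 * cot (ω * h / 2)) / ω ^ 2 := by gcongr; linarith
    _ = cm1 := by rw [hcm1, hc₀]; field_simp; ring
  exact ⟨by linarith, hbound, hpos⟩
end

section
/- Let ω > 0 and h > 0 with ω·h < π, and set b₀ = sin(ω·h)/ω and c₀ = (cos(ω·h) − 1)/ω². Define for real λ the amplification factor r(λ) = 1/(1 − b₀·λ − c₀·λ²). Then 0 < r(λ) < 1 for every real λ < 0, and r(λ) tends to 0 as λ tends to −∞; that is, Integrator B induces no numerical oscillation and strongly damps fast decaying transients. -/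
/-!
For `c ≤ 0` the quadratic term can only increase the denominator `1 - b * l - c * l ^ 2`, so it
suffices to study `1 - b * l`: for `b > 0` this exceeds `1` on the negative axis and grows without
bound as `l → -∞`.
-/

section AmplificationFactor

open Filter Topology

variable {𝕜 : Type*} [Field 𝕜]

/-- The amplification factor `x_t / x_{t-h}` of the implicit scheme
`x_t = x_{t-h} + b * ẋ_t + c * ẍ_t` on the test equation `ẋ = l * x`, where `ẍ = l ^ 2 * x`. -/
def amplificationFactor (b c l : 𝕜) : 𝕜 :=
  1 / (1 - b * l - c * l ^ 2)

variable [LinearOrder 𝕜] [IsStrictOrderedRing 𝕜] {b c l : 𝕜}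

lemma one_sub_mul_le_one_sub_mul_sub_mul_sq (b : 𝕜) (hc : c ≤ 0) (l : 𝕜) :
    1 - b * l ≤ 1 - b * l - c * l ^ 2 :=
  (le_sub_self_iff _).mpr (mul_nonpos_of_nonpos_of_nonneg hc (sq_nonneg l))

lemma one_lt_one_sub_mul_sub_mul_sq (hb : 0 < b) (hc : c ≤ 0) (hl : l < 0) :
    1 < 1 - b * l - c * l ^ 2 :=
  calc
    1 < 1 - b * l := by linarith [mul_neg_of_pos_of_neg hb hl]
    _ ≤ 1 - b * l - c * l ^ 2 := one_sub_mul_le_one_sub_mul_sub_mul_sq b hc l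

lemma amplificationFactor_pos (hb : 0 < b) (hc : c ≤ 0) (hl : l < 0) :
    0 < amplificationFactor b c l :=
  one_div_pos.mpr (zero_lt_one.trans (one_lt_one_sub_mul_sub_mul_sq hb hc hl))

lemma amplificationFactor_lt_one (hb : 0 < b) (hc : c ≤ 0) (hl : l < 0) :
    amplificationFactor b c l < 1 := by
  have one_lt_denom := one_lt_one_sub_mul_sub_mul_sq hb hc hl
  exact (div_lt_one (zero_lt_one.trans one_lt_denom)).mpr one_lt_denom

lemma tendsto_one_sub_mul_sub_mul_sq_atBot (hb : 0 < b) (hc : c ≤ 0) :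
    Tendsto (fun l ↦ 1 - b * l - c * l ^ 2) atBot atTop := by
  have linear_part : Tendsto (fun l ↦ 1 - b * l) atBot atTop := by
    simp only [sub_eq_add_neg]
    exact tendsto_atTop_add_const_left atBot 1
      (tendsto_neg_atBot_atTop.comp (tendsto_id.const_mul_atBot hb))
  exact tendsto_atTop_mono (one_sub_mul_le_one_sub_mul_sub_mul_sq b hc) linear_part

lemma tendsto_amplificationFactor_atBot [TopologicalSpace 𝕜] [OrderTopology 𝕜]
    (hb : 0 < b) (hc : c ≤ 0) :
    Tendsto (amplificationFactor b c) atBot (𝓝 0) :=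
  (tendsto_one_sub_mul_sub_mul_sq_atBot hb hc).const_div_atTop 1

end AmplificationFactor

open Filter in
theorem integratorB_transient_performance
    (ω h : ℝ) (hω : 0 < ω) (hh : 0 < h) (hωh : ω * h < Real.pi)
    (b₀ c₀ : ℝ)
    (hb₀ : b₀ = Real.sin (ω * h) / ω)
    (hc₀ : c₀ = (Real.cos (ω * h) - 1) / ω ^ 2)
    (r : ℝ → ℝ)
    (hr : r = fun l => 1 / (1 - b₀ * l - c₀ * l ^ 2)) :
    (∀ l : ℝ, l < 0 → 0 < r l ∧ r l < 1) ∧ Tendsto r atBot (nhds 0) := by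
  have b₀_pos : 0 < b₀ := by
    rw [hb₀]
    exact div_pos (Real.sin_pos_of_pos_of_lt_pi (mul_pos hω hh) hωh) hω
  have c₀_nonpos : c₀ ≤ 0 := by
    rw [hc₀]
    exact div_nonpos_of_nonpos_of_nonneg (sub_nonpos.mpr (Real.cos_le_one _)) (sq_nonneg ω)
  obtain rfl : r = amplificationFactor b₀ c₀ := hr
  exact ⟨fun l hl ↦ ⟨amplificationFactor_pos b₀_pos c₀_nonpos hl,
    amplificationFactor_lt_one b₀_pos c₀_nonpos hl⟩,
    tendsto_amplificationFactor_atBot b₀_pos c₀_nonpos⟩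
end

section
/- Let h > 0 and define for real λ the amplification factor r(λ) = (1 + (h/2)·λ + (h²/12)·λ²)/(1 − (h/2)·λ + (h²/12)·λ²). Then 0 < r(λ) < 1 for every real λ < 0, and r(λ) tends to 1 as λ tends to −∞; that is, Integrator C induces no numerical oscillation but damps fast decaying transients only slowly. -/
/-! With `z = h * l`, the amplification factor is `P z / P (-z)` for `P = X ^ 2 / 12 + X / 2 + 1`.
The discriminant of `P` is negative, so numerator and denominator are positive, and they differ by
`P z - P (-z) = z`, which puts the factor below `1` exactly on the negative axis. At infinity a
ratio `P z / P (-z)` tends to `(-1) ^ deg P`: the even degree of `P` is what gives the limit `1`,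
where the trapezoidal rule, with `P` of degree one, has the limit `-1`. -/

open Filter Polynomial Topology

theorem quadratic_pos_of_discrim_neg {R : Type*} [CommRing R] [LinearOrder R]
    [IsStrictOrderedRing R] {a b c : R} (ha : 0 < a) (hd : discrim a b c < 0) (x : R) :
    0 < a * (x * x) + b * x + c := by
  have complete_square :
      4 * a * (a * (x * x) + b * x + c) = (2 * a * x + b) ^ 2 - discrim a b c := by
    rw [discrim]
    ring
  have scaled_pos : 0 < 4 * a * (a * (x * x) + b * x + c) :=
    complete_square ▸ sub_pos.2 (hd.trans_le (sq_nonneg _))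
  exact (mul_pos_iff_of_pos_left (mul_pos four_pos ha)).1 scaled_pos

theorem tendsto_eval_div_eval_neg_atBot {𝕜 : Type*} [NormedField 𝕜] [LinearOrder 𝕜]
    [IsStrictOrderedRing 𝕜] [OrderTopology 𝕜] {P : 𝕜[X]} (hP : P ≠ 0) :
    Tendsto (fun x ↦ P.eval x / P.eval (-x)) atBot (𝓝 ((-1) ^ P.natDegree)) := by
  have leadingCoeff_ratio :
      P.leadingCoeff / (P.comp (-X)).leadingCoeff = (-1) ^ P.natDegree := by
    rw [comp_neg_X_leadingCoeff_eq, div_mul_cancel_right₀ (leadingCoeff_ne_zero.2 hP),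
      ← inv_pow, inv_neg_one]
  simpa only [leadingCoeff_ratio, eval_comp, eval_neg, eval_X] using
    P.div_tendsto_atBot_leadingCoeff_div_of_degree_eq (P.comp (-X)) P.degree_comp_neg_X.symm

/-- The numerator of the diagonal `(2, 2)` Padé approximant of `exp`; the denominator is its
reflection `z ↦ -z`. -/
noncomputable def obreshkovNumerator : ℝ[X] :=
  C (1 / 12) * X ^ 2 + C (1 / 2) * X + C 1

/-- The stability function of Integrator C: its amplification factor for `ẋ = l * x` with step
size `h`, as a function of the dimensionless variable `z = h * l`. -/
noncomputable def obreshkovStabilityFunction (z : ℝ) : ℝ :=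
  obreshkovNumerator.eval z / obreshkovNumerator.eval (-z)

theorem eval_obreshkovNumerator (z : ℝ) :
    obreshkovNumerator.eval z = 1 / 12 * (z * z) + 1 / 2 * z + 1 := by
  simp only [obreshkovNumerator, eval_add, eval_mul, eval_C, eval_X, sq]

theorem natDegree_obreshkovNumerator : obreshkovNumerator.natDegree = 2 :=
  natDegree_quadratic (by norm_num)

theorem eval_obreshkovNumerator_pos (z : ℝ) : 0 < obreshkovNumerator.eval z := by
  rw [eval_obreshkovNumerator]
  exact quadratic_pos_of_discrim_neg (by norm_num) (by norm_num [discrim]) z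

theorem eval_obreshkovNumerator_sub_eval_neg (z : ℝ) :
    obreshkovNumerator.eval z - obreshkovNumerator.eval (-z) = z := by
  simp only [eval_obreshkovNumerator]
  ring

theorem obreshkovStabilityFunction_pos (z : ℝ) : 0 < obreshkovStabilityFunction z :=
  div_pos (eval_obreshkovNumerator_pos z) (eval_obreshkovNumerator_pos (-z))

theorem obreshkovStabilityFunction_lt_one_iff {z : ℝ} :
    obreshkovStabilityFunction z < 1 ↔ z < 0 := by
  rw [obreshkovStabilityFunction, div_lt_one (eval_obreshkovNumerator_pos (-z)), ← sub_neg,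
    eval_obreshkovNumerator_sub_eval_neg]

theorem tendsto_obreshkovStabilityFunction_atBot :
    Tendsto obreshkovStabilityFunction atBot (𝓝 1) := by
  have numerator_ne_zero : obreshkovNumerator ≠ 0 :=
    ne_zero_of_natDegree_gt (n := 1) (by rw [natDegree_obreshkovNumerator]; exact one_lt_two)
  have tendsto_ratio := tendsto_eval_div_eval_neg_atBot numerator_ne_zero
  rwa [natDegree_obreshkovNumerator, neg_one_sq] at tendsto_ratio

theorem obreshkovStabilityFunction_mul (h l : ℝ) :
    obreshkovStabilityFunction (h * l) =
      (1 + (h / 2) * l + (h ^ 2 / 12) * l ^ 2) / (1 - (h / 2) * l + (h ^ 2 / 12) * l ^ 2) := by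
  simp only [obreshkovStabilityFunction, eval_obreshkovNumerator]
  congr 1 <;> ring

open Filter in
theorem integratorC_transient_performance
    (h : ℝ) (hh : 0 < h)
    (r : ℝ → ℝ)
    (hr : r = fun l => (1 + (h / 2) * l + (h ^ 2 / 12) * l ^ 2)
      / (1 - (h / 2) * l + (h ^ 2 / 12) * l ^ 2)) :
    (∀ l : ℝ, l < 0 → 0 < r l ∧ r l < 1) ∧ Tendsto r atBot (nhds 1) := by
  obtain rfl : r = fun l ↦ obreshkovStabilityFunction (h * l) := by
    simp only [hr, obreshkovStabilityFunction_mul]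
  constructor
  · intro l hl
    exact ⟨obreshkovStabilityFunction_pos _,
      obreshkovStabilityFunction_lt_one_iff.2 (mul_neg_of_pos_of_neg hh hl)⟩
  · exact tendsto_obreshkovStabilityFunction_atBot.comp (tendsto_id.const_mul_atBot hh)
end
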